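/- Let x ∈ ℝ^K and b ∈ U^K be such that b_1/exp(x_1) ≤ b_2/exp(x_2) ≤ ⋯ ≤ b_K/exp(x_K), and let y be the maximizer of F_{1,x} over Δ^K ∩ {y : y_i ≤ b_i for all i}. Then there exists ρ ∈ {0,…,K} such that y_k = b_k for all k ≤ ρ, and for all k > ρ, y_k < b_k and y_k = (1 − Σ_{i=1}^{ρ} b_i) · exp(x_k)/Σ_{j=ρ+1}^{K} exp(x_j). -/

import Mathlib

/-- The probability simplex Δ^K. -/
def simplex (K : ℕ) : Set (Fin K → ℝ) :=
  {p | (∀ i, 0 ≤ p i) ∧ ∑ i, p i = 1}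

/-- The entropic objective F_{τ,x}(y) = Σ x_i y_i − τ Σ y_i log y_i
(Real.log 0 = 0 gives the convention 0·log 0 = 0). -/
noncomputable def F {K : ℕ} (τ : ℝ) (x y : Fin K → ℝ) : ℝ :=
  ∑ i, x i * y i - τ * ∑ i, y i * Real.log (y i)

theorem aux_tangent (t a : ℝ) (ht : 0 ≤ t) (ha : 0 < a) :
    t * Real.log a + t - a ≤ t * Real.log t := by
  rcases ht.eq_or_lt with h | h
  · subst h; simp; exact ha.le
  · have h1 := Real.log_le_sub_one_of_pos (div_pos ha h)
    rw [Real.log_div ha.ne' h.ne'] at h1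
    have h2 := mul_le_mul_of_nonneg_left h1 h.le
    have h3 : t * (a / t - 1) = a - t := by field_simp
    rw [h3] at h2
    linarith

theorem aux_sum {K : ℕ} (y : Fin K → ℝ) (i j : Fin K) (hij : i ≠ j) (a c : ℝ)
    (f : Fin K → ℝ → ℝ) :
    ∑ k, f k (Function.update (Function.update y i a) j c k) =
      ∑ k, f k (y k) + (f i a - f i (y i)) + (f j c - f j (y j)) := by
  have h : ∀ k, f k (Function.update (Function.update y i a) j c k) =
      f k (y k) + (if k = i then (f i a - f i (y i)) else 0)
        + (if k = j then (f j c - f j (y j)) else 0) := by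
    intro k
    by_cases hj : k = j
    · subst hj
      simp [hij.symm]
    · by_cases hi : k = i
      · subst hi; simp [hj]
      · simp [hi, hj]
  simp only [h, Finset.sum_add_distrib, Finset.sum_ite_eq', Finset.mem_univ, if_true]

theorem aux_key {K : ℕ} (x b y : Fin K → ℝ)
    (hy : y ∈ simplex K ∧ ∀ i, y i ≤ b i)
    (hymax : ∀ z, (z ∈ simplex K ∧ ∀ i, z i ≤ b i) → F 1 x z ≤ F 1 x y)
    (i j : Fin K) (hi : y i < b i) :
    y j * Real.exp (x i) ≤ y i * Real.exp (x j) := by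
  by_contra! hlt
  have hij : i ≠ j := by rintro rfl; exact lt_irrefl _ hlt
  obtain ⟨⟨hpos, hsum⟩, hle⟩ := hy
  have ei := Real.exp_pos (x i)
  have ej := Real.exp_pos (x j)
  obtain ⟨ε, hε, hεb, hεl⟩ : ∃ ε > 0, ε ≤ b i - y i ∧
      (y i + ε) * Real.exp (x j) < (y j - ε) * Real.exp (x i) := by
    set δ := (y j * Real.exp (x i) - y i * Real.exp (x j)) /
      (2 * (Real.exp (x i) + Real.exp (x j))) with hδ
    have hδ0 : 0 < δ := div_pos (by linarith) (by positivity)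
    have hδe : δ * (2 * (Real.exp (x i) + Real.exp (x j))) =
      y j * Real.exp (x i) - y i * Real.exp (x j) := by
      rw [hδ]; field_simp
    refine ⟨min δ (b i - y i), lt_min hδ0 (by linarith), min_le_right _ _, ?_⟩
    have h1 := mul_le_mul_of_nonneg_right (min_le_left δ (b i - y i)) (add_pos ei ej).le
    nlinarith
  have ha : 0 < y i + ε := by linarith [hpos i]
  have hc : 0 < y j - ε := by
    have := (mul_pos ha ej).trans hεl
    exact pos_of_mul_pos_left this ei.le
  have hlog : Real.log (y i + ε) + x j < Real.log (y j - ε) + x i := by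
    have := Real.log_lt_log (mul_pos ha ej) hεl
    rwa [Real.log_mul ha.ne' ej.ne', Real.log_mul hc.ne' ei.ne', Real.log_exp, Real.log_exp] at this
  have hm := hymax (Function.update (Function.update y i (y i + ε)) j (y j - ε)) ⟨⟨?_, ?_⟩, ?_⟩
  · unfold F at hm
    rw [aux_sum y i j hij _ _ (fun k t => x k * t),
      aux_sum y i j hij _ _ (fun _ t => t * Real.log t)] at hm
    have t1 := aux_tangent (y i) (y i + ε) (hpos i) ha
    have t2 := aux_tangent (y j) (y j - ε) (hpos j) hc
    have t3 := mul_lt_mul_of_pos_left hlog hε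
    nlinarith
  · intro k
    by_cases hj : k = j
    · subst hj; simpa using hc.le
    · by_cases hi : k = i
      · subst hi; simpa [hj] using ha.le
      · simpa [hi, hj] using hpos k
  · rw [aux_sum y i j hij _ _ (fun _ t => t), hsum]; ring
  · intro k
    by_cases hj : k = j
    · subst hj; simp only [Function.update_self]; linarith [hle k]
    · by_cases hi : k = i
      · subst hi; simp only [Function.update_of_ne hj, Function.update_self]; linarith
      · simpa [hi, hj] using hle k

/-- with b_i/exp(x_i) nondecreasing, the maximizer y of F_{1,x}
over the upper-bounded simplex has a threshold ρ ∈ {0,…,K}: the first ρ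
coordinates are saturated and the remaining ones are strictly below their
bounds and proportional to exp(x_k). -/
theorem ubsoftmax_sorted_structure
    (K : ℕ) (hK : 1 ≤ K) (x b : Fin K → ℝ)
    (hb : ∀ i, 0 < b i ∧ b i ≤ 1) (hbsum : 1 ≤ ∑ i, b i)
    (hsorted : ∀ i j : Fin K, i ≤ j → b i / Real.exp (x i) ≤ b j / Real.exp (x j))
    (y : Fin K → ℝ)
    (hy : y ∈ simplex K ∧ ∀ i, y i ≤ b i)
    (hymax : ∀ z, (z ∈ simplex K ∧ ∀ i, z i ≤ b i) → F 1 x z ≤ F 1 x y) :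
    ∃ ρ : ℕ, ρ ≤ K ∧
      (∀ k : Fin K, (k : ℕ) < ρ → y k = b k) ∧
      ∀ k : Fin K, ρ ≤ (k : ℕ) →
        y k < b k ∧
        y k = (1 - ∑ i ∈ Finset.univ.filter (fun i : Fin K => (i : ℕ) < ρ), b i) *
          (Real.exp (x k) /
            ∑ j ∈ Finset.univ.filter (fun j : Fin K => ρ ≤ (j : ℕ)), Real.exp (x j)) := by
  have key := aux_key x b y hy hymax
  obtain ⟨⟨hpos, hsum⟩, hle⟩ := hy
  have hmono : ∀ i j : Fin K, i ≤ j → y j = b j → y i = b i := by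
    intro i j hij hj
    by_contra hne
    have hi : y i < b i := lt_of_le_of_ne (hle i) hne
    have h1 := key i j hi
    have h2 := hsorted i j hij
    rw [div_le_div_iff₀ (Real.exp_pos _) (Real.exp_pos _)] at h2
    have h3 := mul_lt_mul_of_pos_right hi (Real.exp_pos (x j))
    rw [hj] at h1
    linarith
  have hex : ∃ ρ : ℕ, ρ ≤ K ∧ (∀ k : Fin K, (k : ℕ) < ρ → y k = b k) ∧
      ∀ k : Fin K, ρ ≤ (k : ℕ) → y k < b k := by
    by_cases hall : ∀ k, y k = b k
    · exact ⟨K, le_rfl, fun k _ => hall k, fun k hk => absurd k.2 (by omega)⟩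
    · classical
      push Not at hall
      have hP : ∃ n : ℕ, ∃ k : Fin K, (k : ℕ) = n ∧ y k ≠ b k := by
        obtain ⟨k, hk⟩ := hall
        exact ⟨k, k, rfl, hk⟩
      obtain ⟨k₀, hk₀, hne⟩ := Nat.find_spec hP
      refine ⟨Nat.find hP, by rw [← hk₀]; exact k₀.2.le, ?_, ?_⟩
      · intro k hk
        by_contra h
        exact Nat.find_min hP hk ⟨k, rfl, h⟩
      · intro k hk
        refine lt_of_le_of_ne (hle k) fun h => hne (hmono k₀ k ?_ h)
        rw [← hk₀] at hk
        exact hk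
  obtain ⟨ρ, hρ, hlow, hhigh⟩ := hex
  refine ⟨ρ, hρ, hlow, fun k hk => ⟨hhigh k hk, ?_⟩⟩
  have hsplit : 1 - ∑ i ∈ Finset.univ.filter (fun i : Fin K => (i : ℕ) < ρ), b i =
      ∑ j ∈ Finset.univ.filter (fun j : Fin K => ρ ≤ (j : ℕ)), y j := by
    have h1 := Finset.sum_filter_add_sum_filter_not Finset.univ (fun i : Fin K => (i : ℕ) < ρ) y
    have h2 : ∑ i ∈ Finset.univ.filter (fun i : Fin K => (i : ℕ) < ρ), y i =
        ∑ i ∈ Finset.univ.filter (fun i : Fin K => (i : ℕ) < ρ), b i :=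
      Finset.sum_congr rfl fun i hi => hlow i (by simpa using hi)
    simp only [not_lt] at h1
    linarith
  have hS : 0 < ∑ j ∈ Finset.univ.filter (fun j : Fin K => ρ ≤ (j : ℕ)), Real.exp (x j) :=
    Finset.sum_pos (fun j _ => Real.exp_pos _) ⟨k, by simpa using hk⟩
  rw [hsplit, ← mul_div_assoc, eq_div_iff hS.ne', Finset.mul_sum, Finset.sum_mul]
  refine Finset.sum_congr rfl fun j hj => ?_
  have hj' : ρ ≤ (j : ℕ) := by simpa using hj
  exact le_antisymm (key j k (hhigh j hj')) (key k j (hhigh k hk))
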